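/- If a group G admits a finite complete rewriting system, then G is algorithmically stackable: there exist a finite symmetric generating set (A′, ρ′, ι′) for G with A′ having decidable equality, a stackable structure for (G, A′), and an extended stacking map Φ for that structure such that the set S_Φ := {(w, a, Φ(π′(w), a)) : w ∈ List A′, a ∈ A′} has computable membership predicate (ComputablePred). -/

import Mathlib

namespace Stk

variable {G : Type*} [Group G] {A : Type*}

/-- Evaluation of a word over the generating alphabet in the group. -/
def eval (ρ : A → G) (w : List A) : G := (w.map ρ).prod

/-- `C` is a set of normal forms: evaluation restricted to `C` is a bijection onto `G`. -/
def IsNormalFormSet (ρ : A → G) (C : Set (List A)) : Prop :=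
  ∀ g : G, ∃! w : List A, w ∈ C ∧ eval ρ w = g

/-- The directed edge `(g, a)` of the Cayley graph is degenerate with respect to `C`. -/
def IsDegenerate (ρ : A → G) (ι : A → A) (C : Set (List A)) (e : G × A) : Prop :=
  ∃ y₁ y₂ : List A, y₁ ∈ C ∧ eval ρ y₁ = e.1 ∧ y₂ ∈ C ∧ eval ρ y₂ = e.1 * ρ e.2 ∧
    (y₁ ++ [e.2] = y₂ ∨ y₁ = y₂ ++ [ι e.2])

/-- A non-degenerate edge is recursive. -/
def IsRecursive (ρ : A → G) (ι : A → A) (C : Set (List A)) (e : G × A) : Prop :=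
  ¬ IsDegenerate ρ ι C e

/-- `e` is one of the edges along the path starting at `g` labeled by the word `w`. -/
def EdgeOnPath (ρ : A → G) (g : G) (w : List A) (e : G × A) : Prop :=
  ∃ i : Fin w.length, e = (g * eval ρ (w.take i), w.get i)

/-- A stackable structure for `(G, A)`: a normal form set `C` containing the empty word,
a well-founded strict partial order `lt` on the recursive edges, and a constant `k`,
such that each edge `(g, a)` admits a word of length at most `k` evaluating to `ρ a`,
each of whose edges along the path from `g` is degenerate or recursive and `lt`-below
`(g, a)`. -/
def IsStackableStructure (ρ : A → G) (ι : A → A) (C : Set (List A))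
    (lt : G × A → G × A → Prop) (k : ℕ) : Prop :=
  ([] : List A) ∈ C ∧ IsNormalFormSet ρ C ∧
  (∀ e e' : G × A, lt e e' → IsRecursive ρ ι C e ∧ IsRecursive ρ ι C e') ∧
  Transitive lt ∧ WellFounded lt ∧
  ∀ g : G, ∀ a : A, ∃ w : List A, w.length ≤ k ∧ eval ρ w = ρ a ∧
    ∀ e' : G × A, EdgeOnPath ρ g w e' → IsDegenerate ρ ι C e' ∨ lt e' (g, a)

/-- The pair `(G, A)` is stackable. -/
def IsStackable (ρ : A → G) (ι : A → A) : Prop :=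
  ∃ (C : Set (List A)) (lt : G × A → G × A → Prop) (k : ℕ),
    IsStackableStructure ρ ι C lt k

/-- A stacking map for a stackable structure. -/
def IsStackingMap (ρ : A → G) (ι : A → A) (C : Set (List A))
    (lt : G × A → G × A → Prop) (k : ℕ) (Φ : G × A → List A) : Prop :=
  ∀ e : G × A, IsRecursive ρ ι C e →
    eval ρ (Φ e) = ρ e.2 ∧ (Φ e).length ≤ k ∧
    ∀ e' : G × A, EdgeOnPath ρ e.1 (Φ e) e' → IsDegenerate ρ ι C e' ∨ lt e' e

/-- A stacking map extended by `Φ (g, a) = [a]` on degenerate edges. -/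
def IsExtendedStackingMap (ρ : A → G) (ι : A → A) (C : Set (List A))
    (lt : G × A → G × A → Prop) (k : ℕ) (Φ : G × A → List A) : Prop :=
  (∀ e : G × A, IsDegenerate ρ ι C e → Φ e = [e.2]) ∧ IsStackingMap ρ ι C lt k Φ

/-- A word is freely reduced if no letter is followed by its formal inverse. -/
def FreelyReduced (ι : A → A) (w : List A) : Prop :=
  List.Chain' (fun a b => b ≠ ι a) w


/-- One rewriting step: replace a contiguous occurrence of a left-hand side of a rule by
the corresponding right-hand side. -/
def Rewrites (R : Set (List A × List A)) (w w' : List A) : Prop :=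
  ∃ r ∈ R, ∃ x y : List A, w = x ++ r.1 ++ y ∧ w' = x ++ r.2 ++ y

/-- A word is irreducible if it contains no left-hand side of a rule as a contiguous
subword. -/
def RWIrreducible (R : Set (List A × List A)) (w : List A) : Prop :=
  ∀ r ∈ R, ¬ r.1 <:+: w

/-- `(A, R, ρ)` is a finite complete rewriting system for `G`: the rules form a finite
set of relations of `G`, each group element is represented by exactly one irreducible
word, and there is no infinite sequence of rewritings. -/
def IsCompleteRewritingSystem (ρ : A → G) (R : Set (List A × List A)) : Prop :=
  R.Finite ∧ (∀ r ∈ R, eval ρ r.1 = eval ρ r.2) ∧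
  (∀ g : G, ∃! w : List A, RWIrreducible R w ∧ eval ρ w = g) ∧
  WellFounded (fun w' w : List A => Rewrites R w w')

/-- A minimal finite complete rewriting system: right-hand sides and all proper subwords
of left-hand sides are irreducible. -/
def IsMinimalCRS (ρ : A → G) (R : Set (List A × List A)) : Prop :=
  IsCompleteRewritingSystem ρ R ∧
  ∀ r ∈ R, RWIrreducible R r.2 ∧
    ∀ u : List A, u <:+: r.1 → u ≠ r.1 → RWIrreducible R u

section Helpers

theorem eval_nil (ρ : A → G) : eval ρ [] = 1 := rfl

theorem eval_cons (ρ : A → G) (a : A) (w : List A) : eval ρ (a :: w) = ρ a * eval ρ w := by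
  simp [eval]

theorem eval_append (ρ : A → G) (v w : List A) : eval ρ (v ++ w) = eval ρ v * eval ρ w := by
  simp [eval]

theorem edgeOnPath_nil (ρ : A → G) (g : G) (e : G × A) : ¬ EdgeOnPath ρ g [] e := by
  rintro ⟨i, _⟩
  exact i.elim0

theorem edgeOnPath_cons (ρ : A → G) (g : G) (a : A) (w : List A) (e : G × A)
    (h : EdgeOnPath ρ g (a :: w) e) : e = (g, a) ∨ EdgeOnPath ρ (g * ρ a) w e := by
  obtain ⟨⟨i, hi⟩, he⟩ := h
  cases i with
  | zero => left; simpa [eval] using he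
  | succ i =>
    right
    refine ⟨⟨i, by simpa using hi⟩, ?_⟩
    rw [he]
    simp [eval, mul_assoc]

theorem edgeOnPath_append (ρ : A → G) (g : G) (v w : List A) (e : G × A)
    (h : EdgeOnPath ρ g (v ++ w) e) : EdgeOnPath ρ g v e ∨ EdgeOnPath ρ (g * eval ρ v) w e := by
  obtain ⟨⟨i, hi⟩, he⟩ := h
  by_cases hv : i < v.length
  · left
    refine ⟨⟨i, hv⟩, ?_⟩
    rw [he]
    simp [List.take_append_of_le_length hv.le, List.getElem_append_left hv]
  · right
    push Not at hv
    refine ⟨⟨i - v.length, by simp at hi; omega⟩, ?_⟩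
    rw [he]
    simp [List.take_append, List.take_of_length_le hv, List.getElem_append_right hv, eval_append,
      mul_assoc]

theorem edgeOnPath_singleton (ρ : A → G) (g : G) (a : A) (e : G × A)
    (h : EdgeOnPath ρ g [a] e) : e = (g, a) := by
  rcases edgeOnPath_cons _ _ _ _ _ h with h | h
  · exact h
  · exact absurd h (edgeOnPath_nil _ _ _)

theorem irr_infix {R : Set (List A × List A)} {v w : List A} (h : v <:+: w)
    (hw : RWIrreducible R w) : RWIrreducible R v :=
  fun r hr h' => hw r hr (h'.trans h)

theorem irr_concat {R : Set (List A × List A)} {w : List A} {a : A}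
    (hw : RWIrreducible R w) (h : ∀ r ∈ R, ¬ r.1 <:+ w ++ [a]) : RWIrreducible R (w ++ [a]) := by
  intro r hr hi
  rcases List.infix_concat_iff.1 hi with h' | h'
  · exact h r hr h'
  · exact hw r hr h'

theorem Rewrites.append {R : Set (List A × List A)} {v w : List A} (h : Rewrites R v w)
    (s : List A) : Rewrites R (v ++ s) (w ++ s) := by
  obtain ⟨r, hr, x, y, rfl, rfl⟩ := h
  exact ⟨r, hr, x, y ++ s, by simp, by simp⟩

theorem transGen_append {R : Set (List A × List A)} {v w : List A}
    (h : Relation.TransGen (Rewrites R) v w) (s : List A) :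
    Relation.TransGen (Rewrites R) (v ++ s) (w ++ s) :=
  Relation.TransGen.lift (· ++ s) (fun _ _ h' => Rewrites.append h' s) _ _ h

theorem reflTransGen_append {R : Set (List A × List A)} {v w : List A}
    (h : Relation.ReflTransGen (Rewrites R) v w) (s : List A) :
    Relation.ReflTransGen (Rewrites R) (v ++ s) (w ++ s) :=
  Relation.ReflTransGen.lift (· ++ s) (fun _ _ h' => Rewrites.append h' s) _ _ h

section CRS

variable {ρ : A → G} {R : Set (List A × List A)}

theorem rewrites_eval (hR : IsCompleteRewritingSystem ρ R) {v w : List A} (h : Rewrites R v w) : eval ρ v = eval ρ w := by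
  obtain ⟨r, hr, x, y, rfl, rfl⟩ := h
  simp [eval_append, hR.2.1 r hr]

theorem exists_reduct (hR : IsCompleteRewritingSystem ρ R) (w : List A) :
    ∃ v, Relation.ReflTransGen (Rewrites R) w v ∧ RWIrreducible R v ∧ eval ρ v = eval ρ w := by
  induction w using hR.2.2.2.induction with
  | _ w ih =>
    by_cases h : RWIrreducible R w
    · exact ⟨w, .refl, h, rfl⟩
    · simp only [RWIrreducible, not_forall, not_not] at h
      obtain ⟨r, hr, x, y, hxy⟩ := h
      have h1 : Rewrites R w (x ++ r.2 ++ y) := ⟨r, hr, x, y, hxy.symm, rfl⟩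
      obtain ⟨v, hv, hv2, hv3⟩ := ih _ h1
      exact ⟨v, .head h1 hv, hv2, hv3.trans (rewrites_eval hR h1).symm⟩

/-- The irreducible representative. -/
noncomputable def nrm (hR : IsCompleteRewritingSystem ρ R) (g : G) : List A := (hR.2.2.1 g).choose

theorem nrm_irr (hR : IsCompleteRewritingSystem ρ R) (g : G) : RWIrreducible R (nrm hR g) := (hR.2.2.1 g).choose_spec.1.1

theorem nrm_eval (hR : IsCompleteRewritingSystem ρ R) (g : G) : eval ρ (nrm hR g) = g := (hR.2.2.1 g).choose_spec.1.2

theorem nrm_eq (hR : IsCompleteRewritingSystem ρ R) {w : List A} (hw : RWIrreducible R w) : nrm hR (eval ρ w) = w :=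
  (hR.2.2.1 _).unique ⟨nrm_irr hR _, nrm_eval hR _⟩ ⟨hw, rfl⟩

theorem reduces_nrm (hR : IsCompleteRewritingSystem ρ R) (w : List A) :
    Relation.ReflTransGen (Rewrites R) w (nrm hR (eval ρ w)) := by
  obtain ⟨v, h1, h2, h3⟩ := exists_reduct hR w
  rw [← h3, nrm_eq hR h2]
  exact h1

theorem lhs_ne_nil (hR : IsCompleteRewritingSystem ρ R) {r : List A × List A} (hr : r ∈ R) : r.1 ≠ [] := by
  intro h
  apply nrm_irr hR 1 r hr
  rw [h]
  exact List.nil_infix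

theorem nil_irr (hR : IsCompleteRewritingSystem ρ R) : RWIrreducible R ([] : List A) :=
  irr_infix List.nil_infix (nrm_irr hR 1)

end CRS

open Classical in
/-- The first rule of the list whose left-hand side is a suffix of the reversal of `w`. -/
noncomputable def findRule : List (List A × List A) → List A → Option (List A × List A)
  | [], _ => none
  | r :: L, w => if r.1.reverse ++ w.drop r.1.length = w then some r else findRule L w

theorem findRule_some {L : List (List A × List A)} {w : List A} {r : List A × List A}
    (h : findRule L w = some r) : r ∈ L ∧ r.1.reverse ++ w.drop r.1.length = w := by
  induction L with
  | nil => simp [findRule] at h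
  | cons r' L ih =>
    rw [findRule] at h
    split_ifs at h with h'
    · simp only [Option.some.injEq] at h
      subst h
      exact ⟨by simp, h'⟩
    · exact ⟨by simp [(ih h).1], (ih h).2⟩

theorem findRule_none {L : List (List A × List A)} {w : List A}
    (h : findRule L w = none) : ∀ r ∈ L, ¬ r.1 <:+ w.reverse := by
  induction L with
  | nil => simp
  | cons r' L ih =>
    rw [findRule] at h
    split_ifs at h with h'
    intro r hr
    rcases List.mem_cons.1 hr with rfl | hr
    · rintro ⟨x, hx⟩
      apply h'
      have : w = r.1.reverse ++ x.reverse := by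
        rw [← List.reverse_append, hx, List.reverse_reverse]
      rw [this]
      simp
    · exact ih h r hr

/-- One step of the normal form machine. -/
noncomputable def stepS (L : List (List A × List A)) (s : List A × List A) : List A × List A :=
  match s.2 with
  | [] => s
  | a :: t =>
    match findRule L (a :: s.1) with
    | none => (a :: s.1, t)
    | some r => ((a :: s.1).drop r.1.length, r.2 ++ t)

theorem stepS_spec {ρ : A → G} {R : Set (List A × List A)} (hR : IsCompleteRewritingSystem ρ R)
    {L : List (List A × List A)} (hL : ∀ r, r ∈ L ↔ r ∈ R)
    (y : List A) (a : A) (t : List A) (hy : RWIrreducible R y.reverse) :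
    RWIrreducible R (stepS L (y, a :: t)).1.reverse ∧
    ((stepS L (y, a :: t) = (a :: y, t)) ∨
     Rewrites R (y.reverse ++ a :: t)
      ((stepS L (y, a :: t)).1.reverse ++ (stepS L (y, a :: t)).2)) := by
  cases h : findRule L (a :: y) with
  | none =>
    have h1 : stepS L (y, a :: t) = (a :: y, t) := by simp [stepS, h]
    refine ⟨?_, Or.inl h1⟩
    rw [h1]
    simp only [List.reverse_cons]
    apply irr_concat hy
    intro r hr
    simpa using findRule_none h r ((hL r).2 hr)
  | some r =>
    obtain ⟨h2, h3⟩ := findRule_some h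
    have h1 : stepS L (y, a :: t) = ((a :: y).drop r.1.length, r.2 ++ t) := by simp [stepS, h]
    rw [h1]
    have hrR := (hL r).1 h2
    refine ⟨?_, Or.inr ⟨r, hrR, ((a :: y).drop r.1.length).reverse, t, ?_, by simp⟩⟩
    · apply irr_infix _ hy
      obtain ⟨n, hn⟩ : ∃ n, r.1.length = n + 1 :=
        Nat.exists_eq_succ_of_ne_zero (by simpa using lhs_ne_nil hR hrR)
      simp only [hn, List.drop_succ_cons, List.reverse_infix]
      exact (List.drop_suffix _ _).isInfix
    · have := congrArg List.reverse h3
      simp only [List.reverse_append, List.reverse_reverse, List.reverse_cons] at this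
      rw [this]
      simp

theorem stepS_halts {ρ : A → G} {R : Set (List A × List A)} (hR : IsCompleteRewritingSystem ρ R)
    {L : List (List A × List A)} (hL : ∀ r, r ∈ L ↔ r ∈ R) (w : List A) :
    ∀ t y : List A, RWIrreducible R y.reverse → y.reverse ++ t = w →
      ∃ k, ((stepS L)^[k] (y, t)).2 = [] := by
  induction w using hR.2.2.2.induction with
  | _ w ih =>
    intro t
    induction t with
    | nil => intro y _ _; exact ⟨0, rfl⟩
    | cons a t iht =>
      intro y hy hw
      obtain ⟨h1, h2⟩ := stepS_spec hR hL y a t hy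
      rcases h2 with h2 | h2
      · rw [h2] at h1
        obtain ⟨k, hk⟩ := iht (a :: y) h1 (by simpa using hw)
        exact ⟨k + 1, by rw [Function.iterate_succ_apply, h2]; exact hk⟩
      · rw [hw] at h2
        obtain ⟨k, hk⟩ := ih _ h2 _ _ h1 rfl
        exact ⟨k + 1, by rw [Function.iterate_succ_apply]; exact hk⟩

theorem stepS_inv {ρ : A → G} {R : Set (List A × List A)} (hR : IsCompleteRewritingSystem ρ R)
    {L : List (List A × List A)} (hL : ∀ r, r ∈ L ↔ r ∈ R) (w : List A) (k : ℕ) :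
    RWIrreducible R ((stepS L)^[k] ([], w)).1.reverse ∧
    eval ρ (((stepS L)^[k] ([], w)).1.reverse ++ ((stepS L)^[k] ([], w)).2) = eval ρ w := by
  induction k with
  | zero => exact ⟨nil_irr hR, rfl⟩
  | succ k ih =>
    rw [Function.iterate_succ_apply']
    generalize (stepS L)^[k] ([], w) = s at ih ⊢
    obtain ⟨y, t⟩ := s
    cases t with
    | nil => exact ih
    | cons a t =>
      obtain ⟨h1, h2⟩ := stepS_spec hR hL y a t ih.1
      refine ⟨h1, ?_⟩
      rcases h2 with h2 | h2
      · rw [h2, ← ih.2]; simp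
      · rw [← rewrites_eval hR h2, ← ih.2]

section Comp

theorem findRule_primrec [Primcodable A] (L : List (List A × List A)) :
    Primrec (findRule L) := by
  classical
  induction L with
  | nil => exact Primrec.const none
  | cons r L ih =>
    refine (Primrec.ite (c := fun w : List A => r.1.reverse ++ w.drop r.1.length = w) ?_
      (Primrec.const (some r)) ih).of_eq ?_
    · exact Primrec.eq.comp (Primrec.list_append.comp (Primrec.const _)
        (Primrec.list_drop.comp (Primrec.const _) Primrec.id)) Primrec.id
    · intro w
      rw [findRule]

theorem stepS_primrec [Primcodable A] (L : List (List A × List A)) :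
    Primrec (stepS L) := by
  have h1 : Primrec (fun s : List A × List A => List.casesOn (motive := fun _ => List A × List A)
      s.2 s fun a t =>
      (fun (s : List A × List A) (p : A × List A) =>
        Option.casesOn (motive := fun _ => List A × List A) (findRule L (p.1 :: s.1))
        (p.1 :: s.1, p.2) (fun r => ((p.1 :: s.1).drop r.1.length, r.2 ++ p.2))) s (a, t)) := by
    refine Primrec.list_casesOn (f := fun s : List A × List A => s.2) (g := fun s => s)
      (h := fun (s : List A × List A) (p : A × List A) =>
        Option.casesOn (motive := fun _ => List A × List A) (findRule L (p.1 :: s.1))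
        (p.1 :: s.1, p.2) (fun r => ((p.1 :: s.1).drop r.1.length, r.2 ++ p.2)))
      Primrec.snd Primrec.id ?_
    have hc : Primrec (fun q : (List A × List A) × (A × List A) => q.2.1 :: q.1.1) :=
      Primrec.list_cons.comp (Primrec.fst.comp Primrec.snd) (Primrec.fst.comp Primrec.fst)
    apply Primrec.option_casesOn
    · exact (findRule_primrec L).comp hc
    · exact hc.pair (Primrec.snd.comp Primrec.snd)
    · apply Primrec.pair
      · exact Primrec.list_drop.comp
          (Primrec.list_length.comp (Primrec.fst.comp Primrec.snd)) (hc.comp Primrec.fst)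
      · exact Primrec.list_append.comp (Primrec.snd.comp Primrec.snd)
          (Primrec.snd.comp (Primrec.snd.comp Primrec.fst))
  refine h1.of_eq ?_
  rintro ⟨y, t⟩
  cases t with
  | nil => rfl
  | cons a t =>
    simp only [stepS]
    cases findRule L (a :: y) <;> rfl

theorem nrm_computable [Primcodable A] {ρ : A → G} {R : Set (List A × List A)}
    (hR : IsCompleteRewritingSystem ρ R) :
    Computable (fun w : List A => nrm hR (eval ρ w)) := by
  classical
  obtain ⟨L, hL⟩ : ∃ L : List (List A × List A), ∀ r, r ∈ L ↔ r ∈ R :=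
    ⟨hR.1.toFinset.toList, by simp⟩
  let f : List A → ℕ → Option (List A) := fun w k =>
    if ((stepS L)^[k] ([], w)).2 = [] then some ((stepS L)^[k] ([], w)).1.reverse else none
  have hit : Primrec (fun p : List A × ℕ => (stepS L)^[p.2] ([], p.1)) :=
    Primrec.nat_iterate (h := fun _ s => stepS L s) Primrec.snd
      ((Primrec.const []).pair Primrec.fst) ((stepS_primrec L).comp Primrec.snd)
  have hf : Primrec₂ f := by
    apply Primrec.ite
    · exact Primrec.eq.comp (Primrec.snd.comp hit) (Primrec.const [])
    · exact Primrec.option_some.comp (Primrec.list_reverse.comp (Primrec.fst.comp hit))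
    · exact Primrec.const none
  refine (Partrec.rfindOpt hf.to_comp).of_eq ?_
  intro w
  have hsp : ∀ a, a ∈ Nat.rfindOpt (f w) → a = nrm hR (eval ρ w) := by
    intro a ha
    obtain ⟨k, hk⟩ := Nat.rfindOpt_spec ha
    simp only [f, Option.mem_def] at hk
    split_ifs at hk with h
    obtain ⟨h1, h2⟩ := stepS_inv hR hL w k
    simp only [Option.some.injEq] at hk
    rw [h, List.append_nil, hk] at h2
    rw [hk] at h1
    rw [← h2, nrm_eq hR h1]
  have hd : (Nat.rfindOpt (f w)).Dom := by
    rw [Nat.rfindOpt_dom]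
    obtain ⟨k, hk⟩ := stepS_halts hR hL w w [] (nil_irr hR) rfl
    exact ⟨k, ((stepS L)^[k] ([], w)).1.reverse, by simp only [f, hk, if_true, Option.mem_def]⟩
  obtain ⟨a, ha⟩ := Part.dom_iff_mem.1 hd
  have := hsp a ha
  subst this
  exact Part.eq_some_iff.2 ha

end Comp

/-- The data relating the alphabet `A` of the rewriting system and the symmetric alphabet `N`. -/
structure Setup {N : Type*} (ρ : A → G) (R : Set (List A × List A)) (ρ' : N → G) (ι' : N → N)
    (pos : A → List N) (base : N → Option A) (toA : N → List A) : Prop where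
  crs : IsCompleteRewritingSystem ρ R
  invol : Function.Involutive ι'
  hinv : ∀ c, ρ' (ι' c) = (ρ' c)⁻¹
  pos_triv : ∀ a, ρ a = 1 → pos a = []
  pos_nontriv : ∀ a, ρ a ≠ 1 → ∃ c, pos a = [c] ∧ base c = some a ∧ ρ' c = ρ a
  base_pos : ∀ c a, base c = some a → pos a = [c] ∧ ρ' c = ρ a
  toA_eval : ∀ c, eval ρ (toA c) = ρ' c

open Classical in
/-- The stacking map in terms of normal forms. -/
noncomputable def phi0 {N : Type*} (L : List (List A × List A)) (ι' : N → N)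
    (pos : A → List N) (base : N → Option A) (toA : N → List A)
    (x : (List A × List A) × N) : List N :=
  if x.1.1.flatMap pos ++ [x.2] = x.1.2.flatMap pos ∨
      x.1.1.flatMap pos = x.1.2.flatMap pos ++ [ι' x.2] then [x.2]
  else
    Option.casesOn (motive := fun _ => List N) (base x.2) ((toA x.2).flatMap pos) fun a =>
      Option.casesOn (motive := fun _ => List N) (findRule L (a :: x.1.1.reverse)) [x.2] fun r =>
        r.1.reverse.tail.flatMap (fun b => (pos b).map ι') ++ r.2.flatMap pos

theorem phi0_primrec {N : Type*} [Finite A] [Finite N] [Primcodable A] [Primcodable N]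
    (L : List (List A × List A)) (ι' : N → N)
    (pos : A → List N) (base : N → Option A) (toA : N → List A) :
    Primrec (phi0 L ι' pos base toA) := by
  classical
  have hF : ∀ (q : A → List N), Primrec (fun w : List A => w.flatMap q) := fun q =>
    Primrec.list_flatMap Primrec.id ((Primrec.dom_finite q).comp Primrec.snd)
  have hy : Primrec (fun x : (List A × List A) × N => x.1.1) := Primrec.fst.comp Primrec.fst
  have hz : Primrec (fun x : (List A × List A) × N => x.1.2) := Primrec.snd.comp Primrec.fst
  have hs : ∀ q : N → N, Primrec (fun x : (List A × List A) × N => [q x.2]) := fun q =>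
    (Primrec.dom_finite (fun c => [q c])).comp Primrec.snd
  apply Primrec.ite
  · apply PrimrecPred.or
    · exact Primrec.eq.comp (Primrec.list_append.comp ((hF pos).comp hy) (hs id)) ((hF pos).comp hz)
    · exact Primrec.eq.comp ((hF pos).comp hy) (Primrec.list_append.comp ((hF pos).comp hz) (hs ι'))
  · exact hs id
  · apply Primrec.option_casesOn
    · exact (Primrec.dom_finite base).comp Primrec.snd
    · exact (Primrec.dom_finite (fun c => (toA c).flatMap pos)).comp Primrec.snd
    · apply Primrec.option_casesOn
      · exact (findRule_primrec L).comp
          (Primrec.list_cons.comp Primrec.snd (Primrec.list_reverse.comp (hy.comp Primrec.fst)))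
      · exact (hs id).comp Primrec.fst
      · exact Primrec.list_append.comp
          ((hF _).comp (Primrec.list_tail.comp
            (Primrec.list_reverse.comp (Primrec.fst.comp Primrec.snd))))
          ((hF pos).comp (Primrec.snd.comp Primrec.snd))

/-- The order on edges, before restricting to recursive edges. -/
def ltW {N : Type*} {ρ : A → G} {R : Set (List A × List A)} (hR : IsCompleteRewritingSystem ρ R)
    (base : N → Option A) (e e' : G × N) : Prop :=
  ∃ b, base e.2 = some b ∧ (base e'.2 = none ∨ ∃ a, base e'.2 = some a ∧ ∃ s,
    Relation.TransGen (Rewrites R) (nrm hR e'.1 ++ [a]) (nrm hR e.1 ++ [b] ++ s))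

theorem ltW_trans {N : Type*} {ρ : A → G} {R : Set (List A × List A)}
    (hR : IsCompleteRewritingSystem ρ R) (base : N → Option A) {e e' e'' : G × N}
    (h : ltW hR base e e') (h' : ltW hR base e' e'') : ltW hR base e e'' := by
  obtain ⟨b, hb, h⟩ := h
  obtain ⟨a, ha, h'⟩ := h'
  refine ⟨b, hb, ?_⟩
  rcases h' with h' | ⟨d, hd, s, hs⟩
  · exact Or.inl h'
  · rcases h with h | ⟨a', ha', t, ht⟩
    · rw [ha] at h; cases h
    · rw [ha] at ha'
      cases ha'
      refine Or.inr ⟨d, hd, t ++ s, hs.trans ?_⟩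
      have := transGen_append ht s
      simpa using this

theorem ltW_wf {N : Type*} {ρ : A → G} {R : Set (List A × List A)}
    (hR : IsCompleteRewritingSystem ρ R) (base : N → Option A) :
    WellFounded (ltW hR base) := by
  have hwf : WellFounded (fun w' w : List A => Relation.TransGen (Rewrites R) w w') := by
    have h1 := hR.2.2.2.transGen
    have h2 : (fun w' w : List A => Relation.TransGen (Rewrites R) w w') =
        Relation.TransGen (fun w' w : List A => Rewrites R w w') := by
      ext w' w
      exact (Relation.transGen_swap (r := Rewrites R)).symm
    rw [h2]
    exact h1
  have key : ∀ w : List A, ∀ e : G × N, ∀ a s, base e.2 = some a → nrm hR e.1 ++ [a] ++ s = w →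
      Acc (ltW hR base) e := by
    intro w
    induction w using hwf.induction with
    | _ w ih =>
      intro e a s ha hw
      constructor
      rintro e' ⟨b, hb, h | ⟨a', ha', t, ht⟩⟩
      · rw [ha] at h; cases h
      · rw [ha] at ha'
        cases ha'
        refine ih _ ?_ e' b (t ++ s) hb rfl
        have := transGen_append ht s
        rw [hw] at this
        simpa using this
  constructor
  intro e
  cases h : base e.2 with
  | some a => exact key _ e a [] h rfl
  | none =>
    constructor
    rintro e' ⟨b, hb, _⟩
    exact key _ e' b [] hb rfl

section Main

variable {N : Type*} {ρ : A → G} {R : Set (List A × List A)} {ρ' : N → G} {ι' : N → N}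
    {pos : A → List N} {base : N → Option A} {toA : N → List A}

/-- The normal form set. -/
def nfs (R : Set (List A × List A)) (pos : A → List N) : Set (List N) :=
  {z | ∃ w, RWIrreducible R w ∧ w.flatMap pos = z}

theorem pos_eval (S : Setup ρ R ρ' ι' pos base toA) (a : A) : eval ρ' (pos a) = ρ a := by
  by_cases h : ρ a = 1
  · rw [S.pos_triv a h, h]; rfl
  · obtain ⟨c, h1, _, h3⟩ := S.pos_nontriv a h
    rw [h1, ← h3]; simp [eval]

theorem flatMap_eval (S : Setup ρ R ρ' ι' pos base toA) (w : List A) : eval ρ' (w.flatMap pos) = eval ρ w := by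
  induction w with
  | nil => rfl
  | cons a w ih => rw [List.flatMap_cons, eval_append, ih, pos_eval S, eval_cons]

theorem toN_eval (S : Setup ρ R ρ' ι' pos base toA) (w : List N) : eval ρ (w.flatMap toA) = eval ρ' w := by
  induction w with
  | nil => rfl
  | cons a w ih => rw [List.flatMap_cons, eval_append, ih, S.toA_eval, eval_cons]

theorem inv_eval (S : Setup ρ R ρ' ι' pos base toA) (w : List A) :
    eval ρ' (w.flatMap (fun b => (pos b).map ι')) = (eval ρ w.reverse)⁻¹ := by
  induction w with
  | nil => simp [eval]
  | cons a w ih =>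
    rw [List.flatMap_cons, eval_append, ih, List.reverse_cons, eval_append, mul_inv_rev]
    congr 1
    by_cases h : ρ a = 1
    · rw [S.pos_triv a h]; simp [eval, h]
    · obtain ⟨c, h1, _, h3⟩ := S.pos_nontriv a h
      rw [h1]; simp [eval, S.hinv, h3]

theorem nfs_unique (S : Setup ρ R ρ' ι' pos base toA) {z : List N} (hz : z ∈ nfs R pos) :
    z = (nrm S.crs (eval ρ' z)).flatMap pos := by
  obtain ⟨w, hw, rfl⟩ := hz
  rw [flatMap_eval S, nrm_eq S.crs hw]

theorem nfs_normal (S : Setup ρ R ρ' ι' pos base toA) : IsNormalFormSet ρ' (nfs R pos) := by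
  intro g
  refine ⟨(nrm S.crs g).flatMap pos, ⟨⟨_, nrm_irr S.crs g, rfl⟩, ?_⟩, ?_⟩
  · rw [flatMap_eval S, nrm_eval]
  · rintro z ⟨hz, rfl⟩
    exact nfs_unique S hz

theorem degenerate_iff (S : Setup ρ R ρ' ι' pos base toA) (g : G) (c : N) : IsDegenerate ρ' ι' (nfs R pos) (g, c) ↔
    ((nrm S.crs g).flatMap pos ++ [c] = (nrm S.crs (g * ρ' c)).flatMap pos ∨
      (nrm S.crs g).flatMap pos = (nrm S.crs (g * ρ' c)).flatMap pos ++ [ι' c]) := by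
  constructor
  · rintro ⟨y, z, hy, hyg, hz, hzg, h⟩
    have h1 := nfs_unique S hy
    have h2 := nfs_unique S hz
    rw [hyg] at h1
    rw [hzg] at h2
    rw [← h1, ← h2]
    exact h
  · intro h
    refine ⟨_, _, ⟨_, nrm_irr S.crs g, rfl⟩, ?_, ⟨_, nrm_irr S.crs (g * ρ' c), rfl⟩, ?_, h⟩
    · rw [flatMap_eval S, nrm_eval]
    · rw [flatMap_eval S, nrm_eval]

theorem path_flatMap (S : Setup ρ R ρ' ι' pos base toA) (v : List A) : ∀ (p : List A) (e : G × N),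
    EdgeOnPath ρ' (eval ρ p) (v.flatMap pos) e →
    ∃ v₁ b v₂, v = v₁ ++ b :: v₂ ∧ e.1 = eval ρ (p ++ v₁) ∧ base e.2 = some b := by
  induction v with
  | nil => intro p e h; exact absurd h (edgeOnPath_nil _ _ _)
  | cons a v ih =>
    intro p e h
    rw [List.flatMap_cons] at h
    rcases edgeOnPath_append _ _ _ _ _ h with h | h
    · by_cases ha : ρ a = 1
      · rw [S.pos_triv a ha] at h
        exact absurd h (edgeOnPath_nil _ _ _)
      · obtain ⟨c, h1, h2, h3⟩ := S.pos_nontriv a ha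
        rw [h1] at h
        have := edgeOnPath_singleton _ _ _ _ h
        subst this
        exact ⟨[], a, v, rfl, by simp, h2⟩
    · rw [pos_eval S] at h
      have h' : eval ρ p * ρ a = eval ρ (p ++ [a]) := by simp [eval]
      rw [h'] at h
      obtain ⟨v₁, b, v₂, h1, h2, h3⟩ := ih _ _ h
      exact ⟨a :: v₁, b, v₂, by simp [h1], by simpa using h2, h3⟩

theorem path_inv (S : Setup ρ R ρ' ι' pos base toA) (q : List A) : ∀ (x : List A) (e : G × N), RWIrreducible R (x ++ q.reverse) →
    EdgeOnPath ρ' (eval ρ (x ++ q.reverse)) (q.flatMap (fun b => (pos b).map ι')) e →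
    IsDegenerate ρ' ι' (nfs R pos) e := by
  induction q with
  | nil => intro x e _ h; exact absurd h (edgeOnPath_nil _ _ _)
  | cons b q ih =>
    intro x e hx h
    have hx2 : RWIrreducible R (x ++ q.reverse) :=
      irr_infix ⟨[], [b], by simp⟩ hx
    have hev : eval ρ (x ++ (b :: q).reverse) = eval ρ (x ++ q.reverse) * ρ b := by
      simp [eval, mul_assoc]
    rw [List.flatMap_cons] at h
    by_cases hb : ρ b = 1
    · rw [S.pos_triv b hb, hev, hb, mul_one] at h
      exact ih x e hx2 h
    · obtain ⟨c, h1, h2, h3⟩ := S.pos_nontriv b hb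
      have hmul : eval ρ (x ++ (b :: q).reverse) * ρ' (ι' c) = eval ρ (x ++ q.reverse) := by
        rw [hev, S.hinv, h3]; group
      rw [h1] at h
      rcases edgeOnPath_cons _ _ _ _ _ h with h | h
      · subst h
        rw [degenerate_iff S, hmul, nrm_eq S.crs hx, nrm_eq S.crs hx2]
        right
        simp [S.invol c, h1]
      · rw [hmul] at h
        exact ih x e hx2 h

theorem main_aux (S : Setup ρ R ρ' ι' pos base toA) [Finite A] [Finite N] [Primcodable A] [Primcodable N] :
    ∃ (C : Set (List N)) (lt : G × N → G × N → Prop) (k : ℕ) (Φ : G × N → List N),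
      IsStackableStructure ρ' ι' C lt k ∧
      IsExtendedStackingMap ρ' ι' C lt k Φ ∧
      ComputablePred (fun x : List N × N × List N =>
        x.2.2 = Φ (eval ρ' x.1, x.2.1)) := by
  classical
  have hR := S.crs
  obtain ⟨L, hL⟩ : ∃ L : List (List A × List A), ∀ r, r ∈ L ↔ r ∈ R :=
    ⟨hR.1.toFinset.toList, by simp⟩
  obtain ⟨k₁, hk₁⟩ := (hR.1.image (fun r : List A × List A =>
    (r.1.reverse.tail.flatMap (fun b => (pos b).map ι') ++ r.2.flatMap pos).length)).bddAbove
  obtain ⟨k₂, hk₂⟩ := (Set.finite_range (fun c : N => ((toA c).flatMap pos).length)).bddAbove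
  let C := nfs R pos
  let lt : G × N → G × N → Prop := fun e e' =>
    IsRecursive ρ' ι' C e ∧ IsRecursive ρ' ι' C e' ∧ ltW hR base e e'
  let k := k₁ + k₂ + 1
  let Φ : G × N → List N := fun e =>
    phi0 L ι' pos base toA ((nrm hR e.1, nrm hR (e.1 * ρ' e.2)), e.2)
  have hΦd : ∀ e : G × N, IsDegenerate ρ' ι' C e → Φ e = [e.2] := by
    rintro ⟨g, c⟩ h
    have h' := (degenerate_iff S g c).1 h
    simp only [Φ, phi0]
    rw [if_pos h']
  have hΦr : IsStackingMap ρ' ι' C lt k Φ := by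
    rintro ⟨g, c⟩ hrec
    have h' := (not_congr (degenerate_iff S g c)).1 hrec
    have hlt : ∀ e' : G × N, ltW hR base e' (g, c) → IsDegenerate ρ' ι' C e' ∨ lt e' (g, c) := by
      intro e' he'
      by_cases hd : IsDegenerate ρ' ι' C e'
      · exact Or.inl hd
      · exact Or.inr ⟨hd, hrec, he'⟩
    have hΦ : Φ (g, c) = _ := if_neg h'
    cases hb : base c with
    | none =>
      simp only [hb] at hΦ
      rw [hΦ]
      refine ⟨?_, ?_, ?_⟩
      · rw [flatMap_eval S, S.toA_eval]
      · have := hk₂ (Set.mem_range_self c)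
        omega
      · intro e' he'
        apply hlt
        simp only at he'
        rw [← nrm_eval hR g] at he'
        obtain ⟨_, b, _, _, _, h⟩ := path_flatMap S _ _ _ he'
        exact ⟨b, h, Or.inl hb⟩
    | some a =>
      obtain ⟨hpa, hρa⟩ := S.base_pos c a hb
      simp only [hb] at hΦ
      cases hf : findRule L (a :: (nrm hR g).reverse) with
      | none =>
        exfalso
        apply h'
        left
        have hirr : RWIrreducible R (nrm hR g ++ [a]) := by
          apply irr_concat (nrm_irr hR g)
          intro r hr
          simpa using findRule_none hf r ((hL r).2 hr)
        have he : g * ρ' c = eval ρ (nrm hR g ++ [a]) := by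
          rw [eval_append, nrm_eval, hρa]; simp [eval]
        rw [he, nrm_eq hR hirr]
        simp [hpa]
      | some r =>
        simp only [hf] at hΦ
        obtain ⟨hrL, hr⟩ := findRule_some hf
        have hrR := (hL r).1 hrL
        obtain ⟨x, hx⟩ : ∃ x, ((a :: (nrm hR g).reverse).drop r.1.length) = x := ⟨_, rfl⟩
        rw [hx] at hr
        obtain ⟨d, q, hq⟩ := List.exists_cons_of_ne_nil
          (show r.1.reverse ≠ [] by simpa using lhs_ne_nil hR hrR)
        rw [hq] at hr
        simp only [List.cons_append, List.cons.injEq] at hr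
        obtain ⟨rfl, hr⟩ := hr
        have hg : nrm hR g = x.reverse ++ q.reverse := by
          rw [← List.reverse_append, hr, List.reverse_reverse]
        have hr1 : r.1 = q.reverse ++ [d] := by
          rw [← List.reverse_cons, ← hq, List.reverse_reverse]
        have hgev : g = eval ρ (x.reverse ++ q.reverse) := by rw [← hg, nrm_eval]
        rw [hΦ]
        refine ⟨?_, ?_, ?_⟩
        · simp only [hq, List.tail_cons]
          rw [eval_append, inv_eval S, flatMap_eval S, ← hR.2.1 r hrR, hr1, eval_append, hρa]
          simp [eval]
        · have := hk₁ (Set.mem_image_of_mem _ hrR)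
          omega
        · intro e' he'
          simp only [hq, List.tail_cons] at he'
          rcases edgeOnPath_append _ _ _ _ _ he' with he' | he'
          · left
            rw [hgev] at he'
            exact path_inv S q x.reverse e' (hg ▸ nrm_irr hR g) he'
          · apply hlt
            have hg2 : g * eval ρ' (q.flatMap (fun b => (pos b).map ι')) = eval ρ x.reverse := by
              rw [inv_eval S, hgev, eval_append]; group
            rw [hg2] at he'
            obtain ⟨v₁, b, v₂, h1, h2, h3⟩ := path_flatMap S _ _ _ he'
            refine ⟨b, h3, Or.inr ⟨d, hb, v₂, ?_⟩⟩
            have hstep : Rewrites R (nrm hR g ++ [d]) (x.reverse ++ v₁ ++ (b :: v₂)) :=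
              ⟨r, hrR, x.reverse, [], by simp [hg, hr1], by simp [h1]⟩
            refine Relation.TransGen.head' hstep ?_
            have := reflTransGen_append (reduces_nrm hR (x.reverse ++ v₁)) (b :: v₂)
            rw [h2]
            simpa using this
  refine ⟨C, lt, k, Φ, ⟨⟨[], nil_irr hR, rfl⟩, nfs_normal S, fun e e' h => ⟨h.1, h.2.1⟩, ?_, ?_, ?_⟩,
    ⟨hΦd, hΦr⟩, ?_⟩
  · intro e e' e'' h h'
    exact ⟨h.1, h'.2.1, ltW_trans hR base h.2.2 h'.2.2⟩
  · exact Subrelation.wf (fun h => h.2.2) (ltW_wf hR base)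
  · intro g c
    by_cases hd : IsDegenerate ρ' ι' C (g, c)
    · refine ⟨[c], by simp [k], by simp [eval], ?_⟩
      intro e' he'
      rw [edgeOnPath_singleton _ _ _ _ he']
      exact Or.inl hd
    · obtain ⟨h1, h2, h3⟩ := hΦr (g, c) hd
      exact ⟨_, h2, h1, h3⟩
  · have hT : Primrec (fun w : List N => w.flatMap toA) :=
      Primrec.list_flatMap Primrec.id ((Primrec.dom_finite toA).comp Primrec.snd)
    have hn : Computable (fun w : List N => nrm hR (eval ρ' w)) := by
      refine ((nrm_computable hR).comp hT.to_comp).of_eq ?_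
      intro w
      rw [toN_eval S]
    have hw : Primrec (fun x : List N × N × List N => x.1) := Primrec.fst
    have hc : Primrec (fun x : List N × N × List N => x.2.1) := Primrec.fst.comp Primrec.snd
    have hwc : Primrec (fun x : List N × N × List N => x.1 ++ [x.2.1]) :=
      Primrec.list_concat.comp hw hc
    have hcomp : Computable (fun x : List N × N × List N => Φ (eval ρ' x.1, x.2.1)) := by
      refine ((phi0_primrec L ι' pos base toA).to_comp.comp
        (((hn.comp hw.to_comp).pair (hn.comp hwc.to_comp)).pair hc.to_comp)).of_eq ?_
      intro x
      simp only [Φ]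
      rw [eval_append]
      simp [eval]
    refine ⟨inferInstance, ?_⟩
    have heq : Primrec₂ (fun a b : List N => decide (a = b)) := Primrec.eq.decide
    exact heq.to_comp.comp (Primrec.snd.comp Primrec.snd).to_comp hcomp

end Main

end Helpers

/-- a group admitting a finite complete rewriting system is algorithmically
stackable over some finite symmetric generating set (with decidable equality, realized
as `Fin n`). -/
theorem algorithmically_stackable_of_completeRewritingSystem {G : Type*} [Group G]
    {A : Type*} [Fintype A]
    (ρ : A → G) (R : Set (List A × List A))
    (hR : IsCompleteRewritingSystem ρ R) :
    ∃ (n : ℕ) (ρ' : Fin n → G) (ι' : Fin n → Fin n)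
      (C : Set (List (Fin n))) (lt : G × Fin n → G × Fin n → Prop) (k : ℕ)
      (Φ : G × Fin n → List (Fin n)),
      Subgroup.closure (Set.range ρ') = ⊤ ∧
      (∀ a : Fin n, ρ' a ≠ 1) ∧
      Function.Involutive ι' ∧
      (∀ a : Fin n, ρ' (ι' a) = (ρ' a)⁻¹) ∧
      IsStackableStructure ρ' ι' C lt k ∧
      IsExtendedStackingMap ρ' ι' C lt k Φ ∧
      ComputablePred (fun x : List (Fin n) × Fin n × List (Fin n) =>
        x.2.2 = Φ (eval ρ' x.1, x.2.1)) := by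
  classical
  let B := {a : A // ρ a ≠ 1}
  let eA : A ≃ Fin (Fintype.card A) := Fintype.equivFin A
  let _ : Primcodable A := Primcodable.ofEquiv (Fin (Fintype.card A)) eA
  let e : (B ⊕ B) ≃ Fin (Fintype.card (B ⊕ B)) := Fintype.equivFin (B ⊕ B)
  let ρ₀ : B ⊕ B → G := Sum.elim (fun b => ρ b.1) (fun b => (ρ b.1)⁻¹)
  let ρ' : Fin (Fintype.card (B ⊕ B)) → G := fun c => ρ₀ (e.symm c)
  let ι' : Fin (Fintype.card (B ⊕ B)) → Fin (Fintype.card (B ⊕ B)) :=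
    fun c => e (e.symm c).swap
  let pos : A → List (Fin (Fintype.card (B ⊕ B))) := fun a =>
    if h : ρ a ≠ 1 then [e (Sum.inl ⟨a, h⟩)] else []
  let base : Fin (Fintype.card (B ⊕ B)) → Option A := fun c =>
    Sum.elim (fun b => some b.1) (fun _ => none) (e.symm c)
  let toA : Fin (Fintype.card (B ⊕ B)) → List A := fun c => nrm hR (ρ' c)
  have S : Setup ρ R ρ' ι' pos base toA := by
    refine ⟨hR, ?_, ?_, ?_, ?_, ?_, ?_⟩
    · intro c
      simp [ι']
    · intro c
      simp only [ρ', ι', Equiv.symm_apply_apply]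
      rcases e.symm c with b | b <;> simp [ρ₀]
    · intro a ha
      simp [pos, ha]
    · intro a ha
      exact ⟨e (Sum.inl ⟨a, ha⟩), by simp [pos, ha], by simp [base], by simp [ρ', ρ₀]⟩
    · intro c a h
      obtain ⟨d, rfl⟩ := e.surjective c
      rcases d with ⟨b, hb⟩ | b
      · simp only [base, Equiv.symm_apply_apply, Sum.elim_inl, Option.some.injEq] at h
        subst h
        exact ⟨by simp [pos, hb], by simp [ρ', ρ₀]⟩
      · simp [base] at h
    · intro c
      exact nrm_eval hR _
  obtain ⟨C, lt, k, Φ, h1, h2, h3⟩ := main_aux S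
  refine ⟨_, ρ', ι', C, lt, k, Φ, ?_, ?_, S.invol, S.hinv, h1, h2, h3⟩
  · rw [eq_top_iff]
    intro g _
    rw [← nrm_eval hR g, ← flatMap_eval S]
    apply Subgroup.list_prod_mem
    intro x hx
    obtain ⟨c, _, rfl⟩ := List.mem_map.1 hx
    exact Subgroup.subset_closure ⟨c, rfl⟩
  · intro c
    simp only [ρ']
    rcases e.symm c with ⟨b, hb⟩ | ⟨b, hb⟩ <;> simpa [ρ₀] using hb

end Stk
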